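/- arXiv:2507.14089 — 13 statements merged into one kernel-verified Lean document; each statement's English description precedes it below -/
import Mathlib

section
/- For every client c ∈ C there exists a facility f ∈ F that is paid with respect to the upper dual values α_{·,1} (i.e., ∑_{c'∈C} [α_{c',1} − cost(c',f)]⁺ ≥ λ) and that satisfies max{r_f², cost(c,f)} ≤ η · α_{c,0}, where η = 8000·Γ¹². -/
/-- Lemma 4.2 (paid facility exists): for every client `c ∈ C` there exists a
facility `f ∈ F` that is paid w.r.t. the upper dual values `α_{·,1}`, i.e.
`∑_{c'∈C} [α_{c',1} − cost(c',f)]⁺ ≥ λ`, and satisfies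
`max{r_f², cost(c,f)} ≤ η · α_{c,0}` with `η = 8000·Γ¹²`. -/
theorem paid_facility_exists
    (d : ℕ) (F C : Finset (EuclideanSpace ℝ (Fin d)))
    (hF : F.Nonempty) (hC : C.Nonempty)
    (lam : ℝ) (hlam : 0 < lam)
    (Γ : ℝ) (hΓ : 5 ≤ Γ)
    -- facility radii: `r f` is the unique nonnegative real with
    -- `∑_{c∈C} [r_f² − cost(c,f)]⁺ = λ`
    (r : EuclideanSpace ℝ (Fin d) → ℝ)
    (hr0 : ∀ f ∈ F, 0 ≤ r f)
    (hr : ∀ f ∈ F, ∑ c ∈ C, max 0 (r f ^ 2 - dist c f ^ 2) = lam)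
    -- `α_c^* = min_{f∈F} max{r_f², cost(c,f)}`
    (αstar : EuclideanSpace ℝ (Fin d) → ℝ)
    (hαstar : ∀ c, αstar c = F.inf' hF (fun f => max (r f ^ 2) (dist c f ^ 2)))
    -- initial dual values with `α_c^*/C_D^+ ≤ α_{c,0} ≤ α_c^*/C_D^-`,
    -- where `C_D^+ = 8Γ⁴` and `C_D^- = 2Γ²`
    (α0 : EuclideanSpace ℝ (Fin d) → ℝ)
    (hα0 : ∀ c ∈ C, αstar c / (8 * Γ ^ 4) ≤ α0 c ∧ α0 c ≤ αstar c / (2 * Γ ^ 2))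
    -- problematic clients `C' ⊆ C`, with `γ₁ = 4Γ⁴`, `γ₂ = 9Γ⁴`, `Q = 8Γ⁴`
    (C' : Finset (EuclideanSpace ℝ (Fin d))) (hC'sub : C' ⊆ C)
    (hprob1 : ∀ c ∈ C,
      (∃ c' ∈ C, dist c c' ≤ 4 * Γ ^ 4 * Real.sqrt (αstar c) ∧
        α0 c' ≤ α0 c / (8 * Γ ^ 4)) → c ∈ C')
    (hprob2 : ∀ c ∈ C', ∃ c' ∈ C, dist c c' ≤ 9 * Γ ^ 4 * Real.sqrt (αstar c) ∧
        α0 c' ≤ α0 c / (8 * Γ ^ 4))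
    -- upper dual values, with `C_A = 8Γ⁸`
    (α1 : EuclideanSpace ℝ (Fin d) → ℝ)
    (hα1prob : ∀ c ∈ C, c ∈ C' → α1 c = α0 c)
    (hα1ok : ∀ c ∈ C, c ∉ C' → α1 c = 8 * Γ ^ 8 * α0 c) :
    ∀ c ∈ C, ∃ f ∈ F,
      lam ≤ ∑ c' ∈ C, max 0 (α1 c' - dist c' f ^ 2) ∧
      max (r f ^ 2) (dist c f ^ 2) ≤ 8000 * Γ ^ 12 * α0 c := by
  intro c hc
  have hG4 : (625:ℝ) ≤ Γ ^ 4 := by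
    have := pow_le_pow_left₀ (by norm_num : (0:ℝ) ≤ 5) hΓ 4
    norm_num at this; exact this
  have hG2 : (25:ℝ) ≤ Γ ^ 2 := by nlinarith
  have hG0 : 0 < Γ := by linarith
  -- witnesses for the minimum
  have key : ∀ x, ∃ g ∈ F, ∃ s, 0 ≤ s ∧ αstar x = s ^ 2 ∧ r g ≤ s ∧ dist x g ≤ s := by
    intro x
    obtain ⟨g, hg, hge⟩ := Finset.exists_mem_eq_inf' hF
      (fun f => max (r f ^ 2) (dist x f ^ 2))
    refine ⟨g, hg, max (r g) (dist x g), le_max_of_le_left (hr0 g hg), ?_,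
      le_max_left _ _, le_max_right _ _⟩
    rw [hαstar, hge]
    have h1 := hr0 g hg
    have h2 : 0 ≤ dist x g := dist_nonneg
    rcases le_total (r g) (dist x g) with h | h
    · rw [max_eq_right h, max_eq_right (pow_le_pow_left₀ h1 h 2)]
    · rw [max_eq_left h, max_eq_left (pow_le_pow_left₀ h2 h 2)]
  have star_le : ∀ x, ∀ f ∈ F, αstar x ≤ max (r f ^ 2) (dist x f ^ 2) := by
    intro x f hf
    rw [hαstar]
    exact Finset.inf'_le (fun f => max (r f ^ 2) (dist x f ^ 2)) hf
  have low : ∀ x ∈ C, αstar x ≤ 8 * Γ ^ 4 * α0 x := by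
    intro x hx
    have := (hα0 x hx).1
    rw [div_le_iff₀ (by positivity)] at this
    linarith
  obtain ⟨f0, hf0, s, hs0, hsα, hrs, hds⟩ := key c
  obtain ⟨f, hf, hmin⟩ := Finset.exists_min_image F
    (fun g => 20 * Γ ^ 4 * r g + dist f0 g) hF
  have hmin2 : ∀ g ∈ F, 20 * Γ ^ 4 * r f ≤ 20 * Γ ^ 4 * r g + dist f g := by
    intro g hg
    have h1 := hmin g hg
    have h2 := dist_triangle f0 f g
    linarith
  have hmin0 := hmin f0 hf0
  simp only [dist_self, add_zero] at hmin0
  have hrf0 := hr0 f hf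
  have hrpos : 0 < r f := by
    rcases hrf0.lt_or_eq with h | h
    · exact h
    · exfalso
      have h1 := hr f hf
      rw [← h] at h1
      rw [Finset.sum_eq_zero] at h1
      · linarith
      · intro x _
        apply max_eq_left
        have := sq_nonneg (dist x f)
        linarith
  refine ⟨f, hf, ?_, ?_⟩
  · rw [← hr f hf]
    apply Finset.sum_le_sum
    intro x hx
    rcases le_or_gt (r f) (dist x f) with hd | hd
    · rw [max_eq_left]
      · exact le_max_left _ _
      · have := pow_le_pow_left₀ hrf0 hd 2
        linarith
    · suffices h : r f ^ 2 ≤ α1 x from max_le_max le_rfl (by linarith)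
      obtain ⟨g, hg, m, hm0, hmα, hrm, hdm⟩ := key x
      have hmr : m ≤ r f := by
        have h1 := star_le x f hf
        rw [max_eq_left (pow_le_pow_left₀ dist_nonneg hd.le 2), hmα] at h1
        exact abs_le_of_sq_le_sq' h1 hrf0 |>.2
      have hmr2 : r f / 2 ≤ m := by
        have h1 := hmin2 g hg
        have h2 := dist_triangle f x g
        rw [dist_comm f x] at h2
        have h3 : 20 * Γ ^ 4 * r g ≤ 20 * Γ ^ 4 * m :=
          mul_le_mul_of_nonneg_left hrm (by positivity)
        by_contra! hcon
        nlinarith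
      have hnp : x ∉ C' := by
        intro hxC
        obtain ⟨y, hy, hxy, hay⟩ := hprob2 x hxC
        rw [hmα, Real.sqrt_sq hm0] at hxy
        obtain ⟨k, hk, t, ht0, htα, hrt, hdt⟩ := key y
        have h1 := low y hy
        rw [le_div_iff₀ (by positivity)] at hay
        have h2 := (hα0 x hx).2
        rw [le_div_iff₀ (by positivity), hmα] at h2
        rw [htα] at h1
        have h3 : t ^ 2 * (2 * Γ ^ 2) ≤ m ^ 2 := by
          refine le_trans ?_ h2
          exact mul_le_mul_of_nonneg_right (by linarith) (by positivity)
        have h4 : (5 * t) ^ 2 ≤ m ^ 2 := by nlinarith [sq_nonneg t]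
        have h5 : 5 * t ≤ m := abs_le_of_sq_le_sq' h4 hm0 |>.2
        have h6 := hmin2 k hk
        have h7 := dist_triangle f x k
        rw [dist_comm f x] at h7
        have h8 := dist_triangle x y k
        have h9 : 20 * Γ ^ 4 * r k ≤ 20 * Γ ^ 4 * (r f / 5) :=
          mul_le_mul_of_nonneg_left (by linarith) (by positivity)
        have h10 : 9 * Γ ^ 4 * m ≤ 9 * Γ ^ 4 * r f :=
          mul_le_mul_of_nonneg_left hmr (by positivity)
        nlinarith
      rw [hα1ok x hx hnp]
      have h1 := low x hx
      rw [hmα] at h1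
      have h2 : Γ ^ 4 * m ^ 2 ≤ Γ ^ 4 * (8 * Γ ^ 4 * α0 x) :=
        mul_le_mul_of_nonneg_left h1 (by positivity)
      have h3 : (r f / 2) ^ 2 ≤ m ^ 2 := pow_le_pow_left₀ (by positivity) hmr2 2
      have h4 : 8 * Γ ^ 8 * α0 x = Γ ^ 4 * (8 * Γ ^ 4 * α0 x) := by ring
      rw [h4]
      refine le_trans ?_ h2
      nlinarith [sq_nonneg m]
  · have h1 := low c hc
    rw [hsα] at h1
    have hd0 : 0 ≤ dist f0 f := dist_nonneg
    have h2 : 20 * Γ ^ 4 * r f0 ≤ 20 * Γ ^ 4 * s :=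
      mul_le_mul_of_nonneg_left hrs (by positivity)
    have h3 : r f ≤ r f0 := by
      by_contra! hcon
      nlinarith
    have h4 : 0 ≤ 20 * Γ ^ 4 * r f := by positivity
    have h5 := dist_triangle c f0 f
    have h6 : dist c f ≤ 21 * Γ ^ 4 * s := by nlinarith
    have h7 : r f ≤ 21 * Γ ^ 4 * s := by nlinarith
    have h8 : (21 * Γ ^ 4 * s) ^ 2 ≤ 8000 * Γ ^ 12 * α0 c := by
      have h9 : 441 * Γ ^ 8 * s ^ 2 ≤ 441 * Γ ^ 8 * (8 * Γ ^ 4 * α0 c) :=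
        mul_le_mul_of_nonneg_left h1 (by positivity)
      have h10 : 0 ≤ 8 * Γ ^ 4 * α0 c := le_trans (sq_nonneg s) h1
      have h11 : 0 ≤ Γ ^ 8 * (8 * Γ ^ 4 * α0 c) := by positivity
      nlinarith
    exact max_le ((pow_le_pow_left₀ hrf0 h7 2).trans h8)
      ((pow_le_pow_left₀ dist_nonneg h6 2).trans h8)
end

section
/- Let c ∈ C be a client and f ∈ F a facility. If c κ-approximately contributes to f with respect to the upper dual values α_{·,1}, i.e., κ·α_{c,1} > cost(c,f) with κ = Γ², then α_{c,1} ≤ ρ·r_f², where ρ := C_A·C_D^+·Q/(C_D^-)² = 128·Γ¹². -/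
/-- Lemma 4.3: if a client `c` κ-approximately contributes to a facility `f`
w.r.t. the upper dual values `α_{·,1}` (i.e. `κ·α_{c,1} > cost(c,f)` with `κ = Γ²`),
then `α_{c,1} ≤ ρ·r_f²` with `ρ = C_A·C_D^+·Q/(C_D^-)² = 128·Γ¹²`. -/
theorem contributing_client_radius_bound
    (d : ℕ) (F C : Finset (EuclideanSpace ℝ (Fin d)))
    (hF : F.Nonempty) (hC : C.Nonempty)
    (lam : ℝ) (hlam : 0 < lam)
    (Γ : ℝ) (hΓ : 5 ≤ Γ)
    -- facility radii
    (r : EuclideanSpace ℝ (Fin d) → ℝ)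
    (hr0 : ∀ f ∈ F, 0 ≤ r f)
    (hr : ∀ f ∈ F, ∑ c ∈ C, max 0 (r f ^ 2 - dist c f ^ 2) = lam)
    -- `α_c^* = min_{f∈F} max{r_f², cost(c,f)}`
    (αstar : EuclideanSpace ℝ (Fin d) → ℝ)
    (hαstar : ∀ c, αstar c = F.inf' hF (fun f => max (r f ^ 2) (dist c f ^ 2)))
    -- initial dual values with `C_D^+ = 8Γ⁴`, `C_D^- = 2Γ²`
    (α0 : EuclideanSpace ℝ (Fin d) → ℝ)
    (hα0 : ∀ c ∈ C, αstar c / (8 * Γ ^ 4) ≤ α0 c ∧ α0 c ≤ αstar c / (2 * Γ ^ 2))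
    -- problematic clients, `γ₁ = 4Γ⁴`, `γ₂ = 9Γ⁴`, `Q = 8Γ⁴`
    (C' : Finset (EuclideanSpace ℝ (Fin d))) (hC'sub : C' ⊆ C)
    (hprob1 : ∀ c ∈ C,
      (∃ c' ∈ C, dist c c' ≤ 4 * Γ ^ 4 * Real.sqrt (αstar c) ∧
        α0 c' ≤ α0 c / (8 * Γ ^ 4)) → c ∈ C')
    (hprob2 : ∀ c ∈ C', ∃ c' ∈ C, dist c c' ≤ 9 * Γ ^ 4 * Real.sqrt (αstar c) ∧
        α0 c' ≤ α0 c / (8 * Γ ^ 4))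
    -- upper dual values, `C_A = 8Γ⁸`
    (α1 : EuclideanSpace ℝ (Fin d) → ℝ)
    (hα1prob : ∀ c ∈ C, c ∈ C' → α1 c = α0 c)
    (hα1ok : ∀ c ∈ C, c ∉ C' → α1 c = 8 * Γ ^ 8 * α0 c) :
    ∀ c ∈ C, ∀ f ∈ F, dist c f ^ 2 < Γ ^ 2 * α1 c →
      α1 c ≤ 128 * Γ ^ 12 * r f ^ 2 := by
  intro c hc f hf hlt
  have hG2 : (25:ℝ) ≤ Γ ^ 2 := by nlinarith
  have hG4 : (1:ℝ) ≤ Γ ^ 4 := by nlinarith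
  have hG0 : 0 < Γ := by linarith
  have hstar : ∀ x, αstar x ≤ max (r f ^ 2) (dist x f ^ 2) := by
    intro x
    rw [hαstar x]
    exact Finset.inf'_le (fun f => max (r f ^ 2) (dist x f ^ 2)) hf
  have hup : ∀ x ∈ C, 2 * Γ ^ 2 * α0 x ≤ αstar x := by
    intro x hx
    have h := (hα0 x hx).2
    rw [le_div_iff₀ (by positivity)] at h
    linarith
  have hα1pos : 0 < α1 c := by
    have h : 0 < Γ ^ 2 * α1 c := lt_of_le_of_lt (sq_nonneg _) hlt
    exact pos_of_mul_pos_right h (by positivity)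
  by_cases hp : c ∈ C'
  · rw [hα1prob c hc hp] at *
    have h1 := hup c hc
    have h0 : 0 < Γ ^ 2 * α0 c := by positivity
    have h2 : 2 * Γ ^ 2 * α0 c ≤ r f ^ 2 := by
      rcases le_max_iff.mp (hstar c) with h | h
      · linarith
      · nlinarith
    have h3 : α0 c ≤ r f ^ 2 := by nlinarith
    have h12 : (1:ℝ) ≤ Γ ^ 12 := one_le_pow₀ (by linarith)
    nlinarith [sq_nonneg (r f)]
  · rw [hα1ok c hc hp] at *
    have hα0pos : 0 < α0 c := pos_of_mul_pos_right hα1pos (by positivity)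
    by_contra hcon
    have hcon2 : 16 * Γ ^ 4 * r f ^ 2 < α0 c := by
      have h8 : 0 < 8 * Γ ^ 8 := by positivity
      refine lt_of_mul_lt_mul_left ?_ h8.le
      push Not at hcon
      calc _ = 128 * Γ ^ 12 * r f ^ 2 := by ring
        _ < _ := hcon
    apply hp
    apply hprob1 c hc
    obtain ⟨c', hc', hpos⟩ : ∃ c' ∈ C, 0 < max 0 (r f ^ 2 - dist c' f ^ 2) := by
      by_contra hno
      push Not at hno
      have := Finset.sum_nonpos hno
      rw [hr f hf] at this
      linarith
    have hd : dist c' f ^ 2 < r f ^ 2 := by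
      rcases lt_max_iff.mp hpos with h | h <;> linarith
    have hs' : αstar c' ≤ r f ^ 2 := (hstar c').trans (max_le le_rfl hd.le)
    have hup' := hup c' hc'
    have hupc := hup c hc
    have hspos : 0 < αstar c := lt_of_lt_of_le (by positivity) hupc
    have hss := Real.sq_sqrt hspos.le
    have hsp := Real.sqrt_pos.mpr hspos
    set s := Real.sqrt (αstar c) with hsdef
    have hr0f := hr0 f hf
    refine ⟨c', hc', ?_, ?_⟩
    · have hdr : dist c' f ≤ r f := (lt_of_pow_lt_pow_left₀ 2 hr0f hd).le
      have h1 : dist c f ≤ 2 * Γ ^ 4 * s := by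
        refine (lt_of_pow_lt_pow_left₀ 2 (by positivity) ?_).le
        calc _ < _ := hlt
          _ = 4 * Γ ^ 8 * (2 * Γ ^ 2 * α0 c) := by ring
          _ ≤ 4 * Γ ^ 8 * αstar c := by gcongr
          _ = _ := by rw [← hss]; ring
      have h2 : r f ≤ s := by
        refine abs_le_of_sq_le_sq' ?_ hsp.le |>.2
        rw [hss]
        nlinarith [sq_nonneg (r f)]
      have h3 := dist_triangle_right c c' f
      nlinarith
    · rw [le_div_iff₀ (by positivity)]
      have h1 : α0 c' ≤ r f ^ 2 := by
        by_contra h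
        push Not at h
        nlinarith [sq_nonneg (r f)]
      have h4 : 0 < 8 * Γ ^ 4 := by positivity
      have := mul_le_mul_of_nonneg_right h1 h4.le
      nlinarith [mul_nonneg (sq_nonneg (r f)) h4.le]
end

section
/- Let c ∈ C be a client and f, f' ∈ F two facilities. If c κ-approximately contributes (with κ = Γ²) to both f and f' with respect to the upper dual values α_{·,1}, i.e., κ·α_{c,1} > cost(c,f) and κ·α_{c,1} > cost(c,f'), then the radii satisfy max{r_f, r_{f'}} ≤ ζ · min{r_f, r_{f'}} with ζ := 1 + 2·√(ρ·κ) = 1 + 16√2·Γ⁷ (where ρ = 128·Γ¹²), and moreover dist(f,f') ≤ 2·√(κ·ρ) · min{r_f, r_{f'}}. -/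
theorem aux_exists_close {d : ℕ} (C : Finset (EuclideanSpace ℝ (Fin d))) (f : EuclideanSpace ℝ (Fin d))
    (R lam : ℝ) (hlam : 0 < lam) (hR : 0 ≤ R)
    (h : ∑ c ∈ C, max 0 (R ^ 2 - dist c f ^ 2) = lam) : ∃ c ∈ C, dist c f < R := by
  by_contra hcon
  push Not at hcon
  have : ∑ c ∈ C, max 0 (R ^ 2 - dist c f ^ 2) = 0 := by
    apply Finset.sum_eq_zero
    intro c hc
    apply max_eq_left
    have := hcon c hc
    nlinarith
  linarith

theorem aux_lip {d : ℕ} (C : Finset (EuclideanSpace ℝ (Fin d))) (f g : EuclideanSpace ℝ (Fin d))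
    (R S lam : ℝ) (hlam : 0 < lam) (hS : 0 ≤ S)
    (hf : ∑ c ∈ C, max 0 (R ^ 2 - dist c f ^ 2) = lam)
    (hg : ∑ c ∈ C, max 0 (S ^ 2 - dist c g ^ 2) = lam) : R ≤ S + dist f g := by
  by_contra hcon
  push Not at hcon
  have hD : 0 ≤ dist f g := dist_nonneg
  have key : ∀ c, dist c g ≤ S → S ^ 2 - dist c g ^ 2 < R ^ 2 - dist c f ^ 2 := by
    intro c hc
    have h1 : dist c f ≤ dist c g + dist f g := by
      rw [dist_comm f g]; exact dist_triangle _ _ _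
    have h2 : 0 ≤ dist c f := dist_nonneg
    have h3 : dist c f ^ 2 ≤ (dist c g + dist f g) ^ 2 := pow_le_pow_left₀ h2 h1 2
    have h4 : (S + dist f g) ^ 2 < R ^ 2 := pow_lt_pow_left₀ hcon (by linarith) (by norm_num)
    nlinarith [mul_nonneg hD (sub_nonneg.2 hc)]
  obtain ⟨c0, hc0, hlt⟩ := aux_exists_close C g S lam hlam hS hg
  have : ∑ c ∈ C, max 0 (S ^ 2 - dist c g ^ 2) < ∑ c ∈ C, max 0 (R ^ 2 - dist c f ^ 2) := by
    apply Finset.sum_lt_sum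
    · intro c _
      rcases le_total (dist c g) S with h | h
      · exact max_le_max le_rfl (key c h).le
      · rw [max_eq_left (by nlinarith)]
        exact le_max_left _ _
    · refine ⟨c0, hc0, ?_⟩
      have h1 := key c0 hlt.le
      have h0 : 0 ≤ dist c0 g := dist_nonneg
      rw [max_eq_right (by nlinarith)]
      exact lt_of_lt_of_le h1 (le_max_right _ _)
  linarith

/-- Lemma 4.4: if a client `c` κ-approximately contributes (with `κ = Γ²`) to two
facilities `f` and `f'` w.r.t. the upper dual values `α_{·,1}`, then
`max{r_f, r_{f'}} ≤ ζ · min{r_f, r_{f'}}` with `ζ = 1 + 2√(ρκ) = 1 + 16√2·Γ⁷`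
(where `ρ = 128Γ¹²`), and moreover `dist(f,f') ≤ 2√(κρ) · min{r_f, r_{f'}}`. -/
theorem contributing_client_same_radius
    (d : ℕ) (F C : Finset (EuclideanSpace ℝ (Fin d)))
    (hF : F.Nonempty) (hC : C.Nonempty)
    (lam : ℝ) (hlam : 0 < lam)
    (Γ : ℝ) (hΓ : 5 ≤ Γ)
    -- facility radii
    (r : EuclideanSpace ℝ (Fin d) → ℝ)
    (hr0 : ∀ f ∈ F, 0 ≤ r f)
    (hr : ∀ f ∈ F, ∑ c ∈ C, max 0 (r f ^ 2 - dist c f ^ 2) = lam)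
    -- `α_c^* = min_{f∈F} max{r_f², cost(c,f)}`
    (αstar : EuclideanSpace ℝ (Fin d) → ℝ)
    (hαstar : ∀ c, αstar c = F.inf' hF (fun f => max (r f ^ 2) (dist c f ^ 2)))
    -- initial dual values with `C_D^+ = 8Γ⁴`, `C_D^- = 2Γ²`
    (α0 : EuclideanSpace ℝ (Fin d) → ℝ)
    (hα0 : ∀ c ∈ C, αstar c / (8 * Γ ^ 4) ≤ α0 c ∧ α0 c ≤ αstar c / (2 * Γ ^ 2))
    -- problematic clients, `γ₁ = 4Γ⁴`, `γ₂ = 9Γ⁴`, `Q = 8Γ⁴`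
    (C' : Finset (EuclideanSpace ℝ (Fin d))) (hC'sub : C' ⊆ C)
    (hprob1 : ∀ c ∈ C,
      (∃ c' ∈ C, dist c c' ≤ 4 * Γ ^ 4 * Real.sqrt (αstar c) ∧
        α0 c' ≤ α0 c / (8 * Γ ^ 4)) → c ∈ C')
    (hprob2 : ∀ c ∈ C', ∃ c' ∈ C, dist c c' ≤ 9 * Γ ^ 4 * Real.sqrt (αstar c) ∧
        α0 c' ≤ α0 c / (8 * Γ ^ 4))
    -- upper dual values, `C_A = 8Γ⁸`
    (α1 : EuclideanSpace ℝ (Fin d) → ℝ)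
    (hα1prob : ∀ c ∈ C, c ∈ C' → α1 c = α0 c)
    (hα1ok : ∀ c ∈ C, c ∉ C' → α1 c = 8 * Γ ^ 8 * α0 c) :
    ∀ c ∈ C, ∀ f ∈ F, ∀ f' ∈ F,
      dist c f ^ 2 < Γ ^ 2 * α1 c → dist c f' ^ 2 < Γ ^ 2 * α1 c →
      max (r f) (r f') ≤ (1 + 16 * Real.sqrt 2 * Γ ^ 7) * min (r f) (r f') ∧
      dist f f' ≤ 2 * Real.sqrt (Γ ^ 2 * (128 * Γ ^ 12)) * min (r f) (r f') := by
  have hΓ0 : 0 < Γ := by linarith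
  have hΓ1 : 1 ≤ Γ := by linarith
  have hle : ∀ c, ∀ f ∈ F, αstar c ≤ max (r f ^ 2) (dist c f ^ 2) := by
    intro c f hf
    rw [hαstar c]
    exact Finset.inf'_le (fun f => max (r f ^ 2) (dist c f ^ 2)) hf
  have key : ∀ c ∈ C, ∀ f ∈ F, dist c f ^ 2 < Γ ^ 2 * α1 c → α1 c ≤ 128 * Γ ^ 12 * r f ^ 2 := by
    intro c hc f hf hd
    have hpos1 : 0 < α1 c := by
      have : 0 < Γ ^ 2 * α1 c := lt_of_le_of_lt (sq_nonneg _) hd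
      exact pos_of_mul_pos_right this (by positivity)
    have hup : α0 c * (2 * Γ ^ 2) ≤ αstar c := (le_div_iff₀ (by positivity)).1 (hα0 c hc).2
    by_cases hcC : c ∈ C'
    · rw [hα1prob c hc hcC] at hd hpos1 ⊢
      have hsp : 0 < αstar c := lt_of_lt_of_le (by positivity) hup
      have h1 : αstar c ≤ r f ^ 2 := by
        rcases le_max_iff.1 (hle c f hf) with h | h
        · exact h
        · linarith
      have h2 : (1:ℝ) ≤ Γ ^ 12 := one_le_pow₀ hΓ1
      have h3 : (1:ℝ) ≤ Γ ^ 2 := one_le_pow₀ hΓ1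
      have h4 : 0 ≤ r f ^ 2 := sq_nonneg _
      nlinarith
    · rw [hα1ok c hc hcC] at hd hpos1 ⊢
      have hp0 : 0 < α0 c := pos_of_mul_pos_right hpos1 (by positivity)
      have hsp : 0 < αstar c := lt_of_lt_of_le (by positivity) hup
      set s := Real.sqrt (αstar c) with hs
      have hs0 : 0 ≤ s := Real.sqrt_nonneg _
      have hss : s ^ 2 = αstar c := Real.sq_sqrt hsp.le
      have hdc : dist c f < 2 * Γ ^ 4 * s := by
        apply lt_of_pow_lt_pow_left₀ 2 (by positivity)
        calc dist c f ^ 2 < Γ ^ 2 * (8 * Γ ^ 8 * α0 c) := hd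
          _ = 4 * Γ ^ 8 * (α0 c * (2 * Γ ^ 2)) := by ring
          _ ≤ 4 * Γ ^ 8 * αstar c := by gcongr
          _ = (2 * Γ ^ 4 * s) ^ 2 := by rw [← hss]; ring
      by_cases hrf : 2 * Γ ^ 4 * s ≤ r f
      · have h1 : (2 * Γ ^ 4 * s) ^ 2 ≤ r f ^ 2 := pow_le_pow_left₀ (by positivity) hrf 2
        have h2 : Γ ^ 2 * (8 * Γ ^ 8 * α0 c) ≤ r f ^ 2 := by
          calc Γ ^ 2 * (8 * Γ ^ 8 * α0 c) = 4 * Γ ^ 8 * (α0 c * (2 * Γ ^ 2)) := by ring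
            _ ≤ 4 * Γ ^ 8 * αstar c := by gcongr
            _ = (2 * Γ ^ 4 * s) ^ 2 := by rw [← hss]; ring
            _ ≤ _ := h1
        have h3 : (1:ℝ) ≤ Γ ^ 2 := one_le_pow₀ hΓ1
        have h4 : (1:ℝ) ≤ Γ ^ 12 := one_le_pow₀ hΓ1
        have h5 : 0 ≤ r f ^ 2 := sq_nonneg _
        nlinarith
      · push Not at hrf
        obtain ⟨c', hc', hlt⟩ := aux_exists_close C f (r f) lam hlam (hr0 f hf) (hr f hf)
        have hcc : dist c c' ≤ 4 * Γ ^ 4 * s := by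
          have := dist_triangle_right c c' f
          linarith
        have hgt : α0 c / (8 * Γ ^ 4) < α0 c' := by
          by_contra hcon
          exact hcC (hprob1 c hc ⟨c', hc', hcc, not_lt.1 hcon⟩)
        have hgt' := (div_lt_iff₀ (by positivity)).1 hgt
        have hup' : α0 c' * (2 * Γ ^ 2) ≤ αstar c' :=
          (le_div_iff₀ (by positivity)).1 (hα0 c' hc').2
        have hst : αstar c' ≤ r f ^ 2 := by
          refine (hle c' f hf).trans (max_le le_rfl ?_)
          exact pow_le_pow_left₀ dist_nonneg hlt.le 2
        calc 8 * Γ ^ 8 * α0 c ≤ 8 * Γ ^ 8 * (α0 c' * (8 * Γ ^ 4)) := by gcongr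
          _ = 32 * Γ ^ 10 * (α0 c' * (2 * Γ ^ 2)) := by ring
          _ ≤ 32 * Γ ^ 10 * r f ^ 2 := by gcongr; exact hup'.trans hst
          _ ≤ 128 * Γ ^ 12 * r f ^ 2 := by gcongr <;> norm_num
  intro c hc f hf f' hf' hd hd'
  have hsq : Real.sqrt (Γ ^ 2 * (128 * Γ ^ 12)) = 8 * Real.sqrt 2 * Γ ^ 7 := by
    rw [Real.sqrt_eq_iff_mul_self_eq (by positivity) (by positivity)]
    have : Real.sqrt 2 * Real.sqrt 2 = 2 := Real.mul_self_sqrt (by norm_num)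
    linear_combination (-(64 * Γ ^ 14)) * this
  have hbound : ∀ g ∈ F, ∀ x, dist c x ^ 2 < Γ ^ 2 * α1 c → dist c g ^ 2 < Γ ^ 2 * α1 c →
      dist c x ≤ Real.sqrt (Γ ^ 2 * (128 * Γ ^ 12)) * r g := by
    intro g hg x hx hcg
    have h0 := hr0 g hg
    refine le_of_pow_le_pow_left₀ two_ne_zero (by positivity) ?_
    rw [mul_pow, Real.sq_sqrt (by positivity)]
    have := mul_le_mul_of_nonneg_left (key c hc g hg hcg) (sq_nonneg Γ)
    linarith
  have hdist : dist f f' ≤ 2 * Real.sqrt (Γ ^ 2 * (128 * Γ ^ 12)) * min (r f) (r f') := by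
    have ht := dist_triangle_left f f' c
    rcases min_choice (r f) (r f') with h | h <;> rw [h]
    · linarith [hbound f hf f hd hd, hbound f hf f' hd' hd]
    · linarith [hbound f' hf' f hd hd', hbound f' hf' f' hd' hd']
  refine ⟨?_, hdist⟩
  have hl1 := aux_lip C f f' (r f) (r f') lam hlam (hr0 f' hf') (hr f hf) (hr f' hf')
  have hl2 := aux_lip C f' f (r f') (r f) lam hlam (hr0 f hf) (hr f' hf') (hr f hf)
  rw [dist_comm f' f] at hl2
  have hnn : 0 ≤ dist f f' := dist_nonneg
  have hmm : max (r f) (r f') ≤ min (r f) (r f') + dist f f' := by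
    rcases le_total (r f) (r f') with h | h
    · rw [max_eq_right h, min_eq_left h]; exact hl2
    · rw [max_eq_left h, min_eq_right h]; exact hl1
  rw [hsq] at hdist
  linarith
end

section
/- Let C be a finite set of points in ℝ^d, let f, f' ∈ ℝ^d, let r ≥ 0, and set r' := r + 2·‖f − f'‖. Then ∑_{c∈C} [r'² − ‖c − f'‖²]⁺ ≥ ∑_{c∈C} [r² − ‖c − f‖²]⁺. (Key inequality in the proof of the lemma on radii of facilities sharing a contributing client: the ball of radius r around f witnesses at least as much payment toward f' at radius r + 2·dist(f,f').) -/
/-- Key inequality in the proof that facilities sharing a contributing client have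
comparable radii: with `r' := r + 2·‖f − f'‖`, the payment witnessed toward `f'`
at radius `r'` is at least the payment witnessed toward `f` at radius `r`. -/
theorem ball_payment_shift
    (d : ℕ) (C : Finset (EuclideanSpace ℝ (Fin d)))
    (f f' : EuclideanSpace ℝ (Fin d)) (r : ℝ) (hr : 0 ≤ r) :
    ∑ c ∈ C, max 0 (r ^ 2 - ‖c - f‖ ^ 2)
      ≤ ∑ c ∈ C, max 0 ((r + 2 * ‖f - f'‖) ^ 2 - ‖c - f'‖ ^ 2) := by
  apply Finset.sum_le_sum
  intro c _
  have h : ‖c - f'‖ ≤ ‖c - f‖ + ‖f - f'‖ := norm_sub_le_norm_sub_add_norm_sub c f f'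
  have hx := norm_nonneg (c - f)
  have hy := norm_nonneg (c - f')
  have hD := norm_nonneg (f - f')
  generalize ‖c - f'‖ = y at *
  generalize ‖c - f‖ = x at *
  generalize ‖f - f'‖ = D at *
  apply max_le (le_max_left _ _)
  rcases le_total x r with hxr | hxr
  · apply le_max_of_le_right
    have h1 : y ^ 2 ≤ (x + D) ^ 2 := pow_le_pow_left₀ hy h 2
    nlinarith [mul_le_mul_of_nonneg_right hxr hD, mul_nonneg hr hD, sq_nonneg D]
  · apply le_max_of_le_left
    nlinarith
end

section
/- Let C be a finite nonempty set of points in ℝ^d and λ > 0. For f ∈ ℝ^d let r_f be the unique nonnegative real with ∑_{c∈C} [r_f² − ‖c − f‖²]⁺ = λ. Then for any two points f, f' ∈ ℝ^d, r_{f'} ≤ r_f + 2·‖f − f'‖. -/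
/-- The facility radius `r_f`, defined as the unique nonnegative real with
`∑_{c∈C} [r_f² − ‖c−f‖²]⁺ = λ`, satisfies `r_{f'} ≤ r_f + 2·‖f − f'‖` for any two
points `f, f'`. -/
theorem radius_lipschitz
    (d : ℕ) (C : Finset (EuclideanSpace ℝ (Fin d))) (hC : C.Nonempty)
    (lam : ℝ) (hlam : 0 < lam)
    (r : EuclideanSpace ℝ (Fin d) → ℝ)
    (hr0 : ∀ f, 0 ≤ r f)
    (hr : ∀ f, ∑ c ∈ C, max 0 (r f ^ 2 - ‖c - f‖ ^ 2) = lam)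
    (f f' : EuclideanSpace ℝ (Fin d)) :
    r f' ≤ r f + 2 * ‖f - f'‖ := by
  by_contra! h
  have key : ∀ c, 0 < r f ^ 2 - ‖c - f‖ ^ 2 →
      r f ^ 2 - ‖c - f‖ ^ 2 < r f' ^ 2 - ‖c - f'‖ ^ 2 := by
    intro c hc
    have h1 : ‖c - f'‖ ≤ ‖c - f‖ + ‖f - f'‖ := norm_sub_le_norm_sub_add_norm_sub c f f'
    have h2 : ‖c - f‖ < r f := lt_of_pow_lt_pow_left₀ 2 (hr0 f) (by linarith)
    have hδ := norm_nonneg (f - f')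
    have ha := norm_nonneg (c - f)
    have h3 : (r f + 2 * ‖f - f'‖) ^ 2 < r f' ^ 2 :=
      pow_lt_pow_left₀ h (by linarith [hr0 f]) two_ne_zero
    have h4 : ‖c - f'‖ ^ 2 ≤ (‖c - f‖ + ‖f - f'‖) ^ 2 :=
      pow_le_pow_left₀ (norm_nonneg _) h1 2
    nlinarith [mul_nonneg hδ (sub_nonneg.2 h2.le), mul_nonneg hδ (hr0 f)]
  have hlt : ∑ c ∈ C, max 0 (r f ^ 2 - ‖c - f‖ ^ 2)
      < ∑ c ∈ C, max 0 (r f' ^ 2 - ‖c - f'‖ ^ 2) := by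
    apply Finset.sum_lt_sum
    · intro c _
      rcases le_or_gt (r f ^ 2 - ‖c - f‖ ^ 2) 0 with h0 | h0
      · rw [max_eq_left h0]
        exact le_max_left _ _
      · exact max_le_max le_rfl (key c h0).le
    · obtain ⟨c, hc, hpos⟩ : ∃ c ∈ C, 0 < max 0 (r f ^ 2 - ‖c - f‖ ^ 2) := by
        apply Finset.exists_lt_of_sum_lt (f := fun _ => (0 : ℝ))
        rw [hr f]
        simpa using hlam
      have h0 : 0 < r f ^ 2 - ‖c - f‖ ^ 2 := by simpa using hpos
      refine ⟨c, hc, ?_⟩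
      rw [max_eq_right h0.le]
      exact lt_max_of_lt_right (key c h0)
  rw [hr f, hr f'] at hlt
  exact lt_irrefl _ hlt
end

section
/- Suppose that for every client c ∈ C the initial dual value satisfies α_{c,0} < α_c^*, where α_c^* := min_{f∈F} max{r_f², cost(c,f)}. Then no facility is paid at the initial dual values: for every facility f ∈ F, ∑_{c∈C} [α_{c,0} − cost(c,f)]⁺ < λ. -/
/-- If every client's initial dual value satisfies `α_{c,0} < α_c^*`, where
`α_c^* = min_{f∈F} max{r_f², cost(c,f)}`, then no facility is paid at the initial
dual values: `∑_{c∈C} [α_{c,0} − cost(c,f)]⁺ < λ` for every facility `f ∈ F`. -/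
theorem no_facility_paid_initially
    (d : ℕ) (F C : Finset (EuclideanSpace ℝ (Fin d)))
    (hF : F.Nonempty) (hC : C.Nonempty)
    (lam : ℝ) (hlam : 0 < lam)
    (r : EuclideanSpace ℝ (Fin d) → ℝ)
    (hr0 : ∀ f ∈ F, 0 ≤ r f)
    (hr : ∀ f ∈ F, ∑ c ∈ C, max 0 (r f ^ 2 - dist c f ^ 2) = lam)
    (α0 : EuclideanSpace ℝ (Fin d) → ℝ)
    (hα0 : ∀ c ∈ C, α0 c < F.inf' hF (fun f => max (r f ^ 2) (dist c f ^ 2))) :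
    ∀ f ∈ F, ∑ c ∈ C, max 0 (α0 c - dist c f ^ 2) < lam := by
  intro f hf
  have key : ∀ c ∈ C, α0 c < max (r f ^ 2) (dist c f ^ 2) := fun c hc =>
    lt_of_lt_of_le (hα0 c hc)
      (Finset.inf'_le (fun f => max (r f ^ 2) (dist c f ^ 2)) hf)
  have hpos : ∃ c ∈ C, 0 < max 0 (r f ^ 2 - dist c f ^ 2) := by
    by_contra! h
    have := Finset.sum_nonpos h
    rw [hr f hf] at this
    linarith
  rw [← hr f hf]
  apply Finset.sum_lt_sum
  · intro c hc
    apply max_le (le_max_left _ _)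
    rcases lt_max_iff.mp (key c hc) with h | h
    · exact le_max_of_le_right (by linarith)
    · exact le_max_of_le_left (by linarith)
  · obtain ⟨c, hc, h⟩ := hpos
    refine ⟨c, hc, max_lt h ?_⟩
    rcases lt_max_iff.mp (key c hc) with h | h
    · exact lt_max_of_lt_right (by linarith)
    · exact lt_max_of_lt_left (by linarith)
end

section
/- Let S ⊆ F, κ ≥ 1, and α : C → ℝ. Define the dependency graph H on vertex set S by joining f ≠ f' whenever there exists a client c ∈ C with κ·α_c > cost(c,f) and κ·α_c > cost(c,f'). Let f₁, f₂ ∈ S be at graph distance at least 4 in H, and let g₁, g₂ ∈ S be such that for i ∈ {1,2}, either g_i = f_i or g_i is adjacent to f_i in H. Then for every α' : C → ℝ with α'_c ≤ κ·α_c for all c, there is no client c ∈ C with both α'_c > cost(c,g₁) and α'_c > cost(c,g₂). (This is Property (II) in the dual-feasibility lemma: each client contributes to the opening cost of at most one opened facility, since opened facilities lie within one hop of cluster centers that are pairwise at distance ≥ 4 in H.) -/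
/-- Property (II) of the dual-feasibility lemma: if `f₁, f₂ ∈ S` are at graph
distance at least `4` in the dependency graph `H`, and `g₁, g₂ ∈ S` each equal,
or are adjacent in `H` to, `f₁` resp. `f₂`, then for any dual values `α'` with
`α'_c ≤ κ·α_c` there is no client contributing to both `g₁` and `g₂`. -/
theorem dependency_graph_separation
    (d : ℕ) (F C S : Finset (EuclideanSpace ℝ (Fin d))) (hS : S ⊆ F)
    (κ : ℝ) (hκ : 1 ≤ κ)
    (α : EuclideanSpace ℝ (Fin d) → ℝ)
    (H : SimpleGraph (EuclideanSpace ℝ (Fin d)))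
    (hH : ∀ f f', H.Adj f f' ↔ f ≠ f' ∧ f ∈ S ∧ f' ∈ S ∧
      ∃ c ∈ C, dist c f ^ 2 < κ * α c ∧ dist c f' ^ 2 < κ * α c)
    (f1 f2 : EuclideanSpace ℝ (Fin d)) (hf1 : f1 ∈ S) (hf2 : f2 ∈ S)
    -- `f₁` and `f₂` are at graph distance at least 4 in `H`
    (hfar : ∀ p : H.Walk f1 f2, 4 ≤ p.length)
    (g1 g2 : EuclideanSpace ℝ (Fin d)) (hg1 : g1 ∈ S) (hg2 : g2 ∈ S)
    (hg1' : g1 = f1 ∨ H.Adj f1 g1) (hg2' : g2 = f2 ∨ H.Adj f2 g2)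
    (α' : EuclideanSpace ℝ (Fin d) → ℝ)
    (hα' : ∀ c ∈ C, α' c ≤ κ * α c) :
    ¬ ∃ c ∈ C, dist c g1 ^ 2 < α' c ∧ dist c g2 ^ 2 < α' c := by
  rintro ⟨c, hc, h1, h2⟩
  have key : ∀ a b : EuclideanSpace ℝ (Fin d), (b = a ∨ H.Adj a b) →
      ∃ p : H.Walk a b, p.length ≤ 1 := by
    rintro a b (rfl | h)
    · exact ⟨SimpleGraph.Walk.nil, by simp⟩
    · exact ⟨SimpleGraph.Walk.cons h SimpleGraph.Walk.nil, by simp⟩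
  have hm : g2 = g1 ∨ H.Adj g1 g2 := by
    by_cases h : g2 = g1
    · exact Or.inl h
    · exact Or.inr ((hH _ _).2 ⟨fun e => h e.symm, hg1, hg2, c, hc,
        lt_of_lt_of_le h1 (hα' c hc), lt_of_lt_of_le h2 (hα' c hc)⟩)
  obtain ⟨p, hp⟩ := key _ _ hg1'
  obtain ⟨q, hq⟩ := key _ _ hm
  obtain ⟨r, hr⟩ := key _ _ hg2'
  have := hfar ((p.append q).append r.reverse)
  simp only [SimpleGraph.Walk.length_append, SimpleGraph.Walk.length_reverse] at this
  omega
end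

section
/- Interpolation between two LMP facility location solutions: let λ₂ > 0, M ≥ 1, integers k₁ ≤ k ≤ k₂ with k₁ < k₂, and set a := (k₂−k)/(k₂−k₁) and b := (k−k₁)/(k₂−k₁), so a, b ≥ 0, a + b = 1 and a·k₁ + b·k₂ = k. Let ᾱ⁽¹⁾, α⁽²⁾ : C → ℝ satisfy ∑_{c∈C}[ᾱ⁽¹⁾_c − cost(c,f)]⁺ ≤ λ₂ and ∑_{c∈C}[α⁽²⁾_c − cost(c,f)]⁺ ≤ λ₂ for all f ∈ F, and let f⁽¹⁾, f⁽²⁾ : C → F be assignments satisfying ∑_{c∈C} cost(c,f⁽¹⁾_c) ≤ M·(∑_{c∈C} ᾱ⁽¹⁾_c − λ₂·k₁) and ∑_{c∈C} cost(c,f⁽²⁾_c) ≤ M·(∑_{c∈C} α⁽²⁾_c − λ₂·k₂). Define α_c := a·ᾱ⁽¹⁾_c + b·α⁽²⁾_c. Then (1) for every f ∈ F, ∑_{c∈C}[α_c − cost(c,f)]⁺ ≤ λ₂; and (2) a·∑_{c∈C} cost(c,f⁽¹⁾_c) + b·∑_{c∈C} cost(c,f⁽²⁾_c) ≤ M·(∑_{c∈C}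 α_c − λ₂·k). -/
/-- Interpolation between two LMP facility location solutions: the convex
combination `α_c = a·ᾱ⁽¹⁾_c + b·α⁽²⁾_c` is dual feasible for opening cost `λ₂`,
and the corresponding convex combination of the connection costs is within a
factor `M` of `∑_c α_c − λ₂·k`. -/
theorem interpolation_lmp
    (d : ℕ) (F C : Finset (EuclideanSpace ℝ (Fin d)))
    (lam2 M : ℝ) (hlam2 : 0 < lam2) (hM : 1 ≤ M)
    (k k1 k2 : ℕ) (h12 : k1 < k2) (hk1 : k1 ≤ k) (hk2 : k ≤ k2)
    (a b : ℝ)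
    (ha : a = ((k2 : ℝ) - k) / ((k2 : ℝ) - k1))
    (hb : b = ((k : ℝ) - k1) / ((k2 : ℝ) - k1))
    (α1 α2 : EuclideanSpace ℝ (Fin d) → ℝ)
    (hfeas1 : ∀ f ∈ F, ∑ c ∈ C, max 0 (α1 c - dist c f ^ 2) ≤ lam2)
    (hfeas2 : ∀ f ∈ F, ∑ c ∈ C, max 0 (α2 c - dist c f ^ 2) ≤ lam2)
    (f1 f2 : EuclideanSpace ℝ (Fin d) → EuclideanSpace ℝ (Fin d))
    (hf1 : ∀ c ∈ C, f1 c ∈ F) (hf2 : ∀ c ∈ C, f2 c ∈ F)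
    (hLMP1 : ∑ c ∈ C, dist c (f1 c) ^ 2 ≤ M * (∑ c ∈ C, α1 c - lam2 * k1))
    (hLMP2 : ∑ c ∈ C, dist c (f2 c) ^ 2 ≤ M * (∑ c ∈ C, α2 c - lam2 * k2)) :
    (∀ f ∈ F, ∑ c ∈ C, max 0 (a * α1 c + b * α2 c - dist c f ^ 2) ≤ lam2) ∧
    a * ∑ c ∈ C, dist c (f1 c) ^ 2 + b * ∑ c ∈ C, dist c (f2 c) ^ 2 ≤
      M * (∑ c ∈ C, (a * α1 c + b * α2 c) - lam2 * k) := by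
  have h1 : (k1 : ℝ) < k2 := by exact_mod_cast h12
  have h2 : (k1 : ℝ) ≤ k := by exact_mod_cast hk1
  have h3 : (k : ℝ) ≤ k2 := by exact_mod_cast hk2
  have hpos : (0 : ℝ) < (k2 : ℝ) - k1 := by linarith
  have ha0 : 0 ≤ a := by rw [ha]; exact div_nonneg (by linarith) hpos.le
  have hb0 : 0 ≤ b := by rw [hb]; exact div_nonneg (by linarith) hpos.le
  have hab : a + b = 1 := by
    rw [ha, hb, ← add_div, div_eq_one_iff_eq hpos.ne']; ring
  have hk : a * k1 + b * k2 = k := by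
    rw [ha, hb]; field_simp; ring
  clear ha hb
  constructor
  · intro f hf
    calc ∑ c ∈ C, max 0 (a * α1 c + b * α2 c - dist c f ^ 2)
        ≤ ∑ c ∈ C, (a * max 0 (α1 c - dist c f ^ 2) + b * max 0 (α2 c - dist c f ^ 2)) := by
          refine Finset.sum_le_sum fun c _ => max_le (by positivity) ?_
          have e1 := mul_le_mul_of_nonneg_left (le_max_right 0 (α1 c - dist c f ^ 2)) ha0
          have e2 := mul_le_mul_of_nonneg_left (le_max_right 0 (α2 c - dist c f ^ 2)) hb0
          have e3 : (a + b) * dist c f ^ 2 = dist c f ^ 2 := by rw [hab, one_mul]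
          linarith
      _ = a * ∑ c ∈ C, max 0 (α1 c - dist c f ^ 2)
          + b * ∑ c ∈ C, max 0 (α2 c - dist c f ^ 2) := by
          rw [Finset.sum_add_distrib, Finset.mul_sum, Finset.mul_sum]
      _ ≤ a * lam2 + b * lam2 := by
          gcongr
          · exact hfeas1 f hf
          · exact hfeas2 f hf
      _ = lam2 := by rw [← add_mul, hab, one_mul]
  · rw [Finset.sum_add_distrib, ← Finset.mul_sum, ← Finset.mul_sum, ← hk]
    have e1 := mul_le_mul_of_nonneg_left hLMP1 ha0
    have e2 := mul_le_mul_of_nonneg_left hLMP2 hb0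
    linarith
end

section
/- For every constant ε > 0 there exists a constant Γ ≥ 1 such that for every dimension d ≥ 1 and every sufficiently large finite set P ⊂ ℝ^d of n points whose pairwise distances all lie in [1, n^6], there exist an edge set E on vertex set P with |E| ≤ n^{1+ε} and positive edge weights w : E → ℝ_{>0} such that: (I) for any two distinct points x, y ∈ P, either E contains an edge e = {x,y} with w(e) ≤ dist(x,y)/2, or there exists z ∈ P with e₁ = {x,z} ∈ E, e₂ = {z,y} ∈ E and w(e₁) + w(e₂) ≤ dist(x,y); and (II) for any two points x, y ∈ P, dist(x,y) ≤ Γ·d_G(x,y), where d_G denotes the weighted shortest-path distance in the graph G = (P, E, w). -/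
/-- The total weight of a walk `l = [x₀, x₁, …, x_k]`, i.e. `∑ w({x_{i-1}, x_i})`. -/
def walkWeight {V : Type*} (w : Sym2 V → ℝ) (l : List V) : ℝ :=
  (List.zipWith (fun a b => w s(a, b)) l l.tail).sum

/-- `l` is a walk in the graph with edge set `E`: all consecutive pairs are edges. -/
def IsWalkIn {V : Type*} (E : Finset (Sym2 V)) (l : List V) : Prop :=
  List.Chain' (fun a b => s(a, b) ∈ E) l

theorem growth_aux (k : ℕ) (hk : 1 ≤ k) (q : ℝ) (hq : 1 ≤ q) (f : ℕ → ℝ)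
    (h0 : 1 ≤ f 0) (hf : f k ≤ q ^ k) : ∃ j < k, f (j + 1) ≤ q * f j := by
  by_contra! h
  have key : ∀ j, j ≤ k → q ^ j ≤ f j ∧ (1 ≤ j → q ^ j < f j) := by
    intro j
    induction j with
    | zero => intro _; simpa using h0
    | succ j ih =>
      intro hj
      have h1 := (ih (by omega)).1
      have h2 := h j (by omega)
      have h3 : q ^ (j + 1) < f (j + 1) := by
        rw [pow_succ']
        have : q * q ^ j ≤ q * f j := mul_le_mul_of_nonneg_left h1 (by linarith)
        linarith
      exact ⟨h3.le, fun _ => h3⟩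
  have := (key k le_rfl).2 hk
  linarith

open Classical in
theorem scale_aux {α : Type*} [MetricSpace α] (k : ℕ) (hk : 1 ≤ k) (q r : ℝ) (hq : 1 ≤ q)
    (hr : 0 < r) : ∀ (m : ℕ) (U : Finset α), U.card = m → (U.card : ℝ) ≤ q ^ k →
    ∃ E : Finset (Sym2 α), (∀ e ∈ E, ¬ e.IsDiag ∧ ∀ v ∈ e, v ∈ U) ∧
      (E.card : ℝ) ≤ q * U.card ∧
      ∀ x ∈ U, ∀ y ∈ U, x ≠ y → dist x y ≤ r → s(x, y) ∈ E ∨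
        ∃ z ∈ U, s(x, z) ∈ E ∧ s(z, y) ∈ E ∧ dist x z + dist z y ≤ 2 * k * r := by
  intro m
  induction m using Nat.strong_induction_on with
  | _ m ih =>
  intro U hm hU
  rcases U.eq_empty_or_nonempty with rfl | ⟨v, hv⟩
  · exact ⟨∅, by simp⟩
  set B : ℕ → Finset α := fun j => U.filter (fun u => dist v u ≤ j * r) with hB
  have hBmem : ∀ j u, u ∈ B j ↔ u ∈ U ∧ dist v u ≤ j * r := by
    intro j u; simp [hB]
  have hvB : ∀ j, v ∈ B j := by
    intro j
    rw [hBmem]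
    exact ⟨hv, by rw [dist_self]; positivity⟩
  obtain ⟨j, hjk, hj⟩ := growth_aux k hk q hq (fun j => ((B j).card : ℝ))
    (by
      have : 0 < (B 0).card := Finset.card_pos.2 ⟨v, hvB 0⟩
      show (1 : ℝ) ≤ ((B 0).card : ℝ)
      exact_mod_cast this)
    (by
      refine le_trans ?_ hU
      exact_mod_cast Finset.card_le_card (Finset.filter_subset _ _))
  have hsub : B j ⊆ U := Finset.filter_subset _ _
  have hcard : (U \ B j).card + (B j).card = U.card := Finset.card_sdiff_add_card_eq_card hsub
  have hpos : 0 < (B j).card := Finset.card_pos.2 ⟨v, hvB j⟩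
  have hcardR : ((U \ B j).card : ℝ) + ((B j).card : ℝ) = U.card := by exact_mod_cast hcard
  obtain ⟨E', hE1, hE2, hE3⟩ := ih (U \ B j).card (by omega) (U \ B j) rfl
    (by
      have : (0 : ℝ) ≤ (B j).card := by positivity
      linarith)
  set S : Finset (Sym2 α) := ((B (j + 1)).erase v).image (fun u => s(v, u)) with hS
  have hSmem : ∀ u, u ∈ B (j + 1) → u ≠ v → s(v, u) ∈ S := by
    intro u hu huv
    exact Finset.mem_image.2 ⟨u, Finset.mem_erase.2 ⟨huv, hu⟩, rfl⟩
  have hScard : (S.card : ℝ) ≤ (B (j + 1)).card := by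
    exact_mod_cast Finset.card_image_le.trans (Finset.card_le_card (Finset.erase_subset _ _))
  have hstar : ∀ x ∈ B (j + 1), ∀ y ∈ B (j + 1), x ≠ y → s(x, y) ∈ E' ∪ S ∨
        ∃ z ∈ U, s(x, z) ∈ E' ∪ S ∧ s(z, y) ∈ E' ∪ S ∧
          dist x z + dist z y ≤ 2 * k * r := by
    intro x hx y hy hxy
    by_cases hxv : x = v
    · left
      subst hxv
      exact Finset.mem_union_right _ (hSmem y hy (Ne.symm hxy))
    by_cases hyv : y = v
    · left
      subst hyv
      rw [Sym2.eq_swap]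
      exact Finset.mem_union_right _ (hSmem x hx hxv)
    right
    refine ⟨v, hv, ?_, Finset.mem_union_right _ (hSmem y hy hyv), ?_⟩
    · rw [Sym2.eq_swap]
      exact Finset.mem_union_right _ (hSmem x hx hxv)
    · have h1 := ((hBmem _ _).1 hx).2
      have h2 := ((hBmem _ _).1 hy).2
      have h3 : ((j + 1 : ℕ) : ℝ) * r ≤ k * r :=
        mul_le_mul_of_nonneg_right (by exact_mod_cast hjk) hr.le
      rw [dist_comm x v]
      linarith
  have hmono : ∀ x ∈ B j, ∀ y ∈ U, dist x y ≤ r → y ∈ B (j + 1) := by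
    intro x hx y hy hxy
    rw [hBmem]
    refine ⟨hy, ?_⟩
    have h1 := ((hBmem _ _).1 hx).2
    have := dist_triangle v x y
    push_cast
    linarith
  refine ⟨E' ∪ S, ?_, ?_, ?_⟩
  · intro e he
    rcases Finset.mem_union.1 he with he | he
    · exact ⟨(hE1 e he).1, fun u hu => (Finset.mem_sdiff.1 ((hE1 e he).2 u hu)).1⟩
    · obtain ⟨u, hu, rfl⟩ := Finset.mem_image.1 he
      obtain ⟨huv, hu⟩ := Finset.mem_erase.1 hu
      refine ⟨fun h => huv (Sym2.mk_isDiag_iff.1 h).symm, ?_⟩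
      intro t ht
      rcases Sym2.mem_iff.1 ht with rfl | rfl
      · exact hv
      · exact ((hBmem _ _).1 hu).1
  · have h1 : ((E' ∪ S).card : ℝ) ≤ E'.card + S.card := by
      exact_mod_cast Finset.card_union_le E' S
    have h2 : q * (U.card : ℝ) = q * (U \ B j).card + q * (B j).card := by
      rw [← hcardR]; ring
    have h3 : ((B (j + 1)).card : ℝ) ≤ q * (B j).card := hj
    linarith
  · intro x hx y hy hxy hd
    by_cases hxB : x ∈ B j
    · refine hstar x ?_ y (hmono x hxB y hy hd) hxy
      exact hmono x hxB x hx (by rw [dist_self]; exact hr.le)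
    by_cases hyB : y ∈ B j
    · refine hstar x (hmono y hyB x hx (by rwa [dist_comm])) y ?_ hxy
      exact hmono y hyB y hy (by rw [dist_self]; exact hr.le)
    rcases hE3 x (Finset.mem_sdiff.2 ⟨hx, hxB⟩) y (Finset.mem_sdiff.2 ⟨hy, hyB⟩) hxy hd with
      h | ⟨z, hz, h1, h2, h3⟩
    · exact Or.inl (Finset.mem_union_left _ h)
    · exact Or.inr ⟨z, (Finset.mem_sdiff.1 hz).1, Finset.mem_union_left _ h1,
        Finset.mem_union_left _ h2, h3⟩

theorem walk_aux {α : Type*} [MetricSpace α] (w : Sym2 α → ℝ) (G : ℝ)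
    (hw : ∀ a b, G * w s(a, b) = dist a b) : ∀ (l : List α) (x y : α),
    l.head? = some x → l.getLast? = some y → dist x y ≤ G * walkWeight w l := by
  intro l
  induction l with
  | nil => intro x y h; simp at h
  | cons a t ih =>
    intro x y hx hy
    cases t with
    | nil =>
      simp at hx hy
      subst hx; subst hy
      simp [walkWeight]
    | cons b t =>
      simp only [List.head?_cons, Option.some.injEq] at hx
      subst hx
      have h1 := ih b y (by simp) (by simpa using hy)
      have h2 : walkWeight w (a :: b :: t) = w s(a, b) + walkWeight w (b :: t) := by
        simp [walkWeight]
      rw [h2, mul_add, hw]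
      exact (dist_triangle a b y).trans (by linarith)

theorem log_aux (δ : ℝ) (hδ : 0 < δ) : ∃ n₀ : ℕ, ∀ n : ℕ, n₀ ≤ n →
    ((6 * (Nat.log 2 n + 1) : ℕ) : ℝ) ≤ (n : ℝ) ^ δ := by
  have h1 := (isLittleO_log_rpow_atTop hδ).bound (c := Real.log 2 / 12)
    (by have := Real.log_pos (one_lt_two); positivity)
  have h2 := (tendsto_rpow_atTop hδ).eventually_ge_atTop 12
  have h3 := (tendsto_natCast_atTop_atTop (R := ℝ)).eventually
    ((h1.and h2).and (Filter.eventually_ge_atTop 1))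
  obtain ⟨n₀, hn⟩ := Filter.eventually_atTop.1 h3
  refine ⟨n₀, fun n hnn => ?_⟩
  obtain ⟨⟨ha, hb⟩, hc⟩ := hn n hnn
  have hl2 := Real.log_pos (one_lt_two)
  have hpos : (0 : ℝ) ≤ (n : ℝ) ^ δ := by positivity
  rw [Real.norm_of_nonneg (Real.log_nonneg hc), Real.norm_of_nonneg hpos] at ha
  have h4 : (Nat.log 2 n : ℝ) * Real.log 2 ≤ Real.log n := by
    rw [← Real.log_pow]
    apply Real.log_le_log (by positivity)
    have : n ≠ 0 := by
      rintro rfl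
      norm_num at hc
    exact_mod_cast Nat.pow_log_le_self 2 this
  have h5 : (Nat.log 2 n : ℝ) ≤ (n : ℝ) ^ δ / 12 := by
    refine le_of_mul_le_mul_right ?_ hl2
    linarith
  push_cast
  linarith

/-- Sparse graph approximation of a Euclidean point set (Lemma 5.4): for every
`ε > 0` there is a constant `Γ ≥ 1` such that every sufficiently large point set
`P ⊂ ℝ^d` with pairwise distances in `[1, n⁶]` admits a weighted graph on `P` with
at most `n^{1+ε}` edges and positive weights such that (I) every pair of distinct
points is connected by an edge of weight `≤ dist(x,y)/2` or a 2-hop path of weight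
`≤ dist(x,y)`, and (II) every walk from `x` to `y` has weight at least
`dist(x,y)/Γ`. -/
theorem sparse_graph_approximation :
    ∀ ε : ℝ, 0 < ε → ∃ Γ : ℝ, 1 ≤ Γ ∧ ∃ n₀ : ℕ,
      ∀ d : ℕ, 1 ≤ d →
      ∀ P : Finset (EuclideanSpace ℝ (Fin d)), n₀ ≤ P.card →
      (∀ x ∈ P, ∀ y ∈ P, x ≠ y →
        1 ≤ dist x y ∧ dist x y ≤ (P.card : ℝ) ^ (6 : ℕ)) →
      ∃ (E : Finset (Sym2 (EuclideanSpace ℝ (Fin d))))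
        (w : Sym2 (EuclideanSpace ℝ (Fin d)) → ℝ),
        -- edges are unordered pairs of distinct points of `P`
        (∀ e ∈ E, ¬ e.IsDiag ∧ ∀ v ∈ e, v ∈ P) ∧
        -- at most `n^{1+ε}` edges
        (E.card : ℝ) ≤ (P.card : ℝ) ^ ((1 : ℝ) + ε) ∧
        -- positive edge weights
        (∀ e ∈ E, 0 < w e) ∧
        -- property (I)
        (∀ x ∈ P, ∀ y ∈ P, x ≠ y →
          (s(x, y) ∈ E ∧ w s(x, y) ≤ dist x y / 2) ∨
          (∃ z ∈ P, s(x, z) ∈ E ∧ s(z, y) ∈ E ∧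
            w s(x, z) + w s(z, y) ≤ dist x y)) ∧
        -- property (II): `dist(x,y) ≤ Γ · d_G(x,y)`
        (∀ x ∈ P, ∀ y ∈ P, ∀ l : List (EuclideanSpace ℝ (Fin d)),
          l.head? = some x → l.getLast? = some y → IsWalkIn E l →
          dist x y ≤ Γ * walkWeight w l) := by
  classical
  intro ε hε
  obtain ⟨k, hk⟩ := exists_nat_ge (2 / ε)
  have hkpos : (0 : ℝ) < k := lt_of_lt_of_le (by positivity) hk
  have hk1 : 1 ≤ k := by exact_mod_cast hkpos
  have hk1R : (1 : ℝ) ≤ k := by exact_mod_cast hk1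
  have hδ : 0 < ε / 2 := by positivity
  obtain ⟨n₁, hn₁⟩ := log_aux (ε / 2) hδ
  refine ⟨4 * k, by linarith, max n₁ 1, ?_⟩
  intro d _ P hP hdist
  have hPn₁ : n₁ ≤ P.card := le_trans (le_max_left _ _) hP
  have hP1 : 1 ≤ P.card := le_trans (le_max_right _ _) hP
  have hP1R : (1 : ℝ) ≤ P.card := by exact_mod_cast hP1
  set q : ℝ := (P.card : ℝ) ^ (ε / 2) with hq
  have hq1 : 1 ≤ q := Real.one_le_rpow hP1R hδ.le
  have hqk : (P.card : ℝ) ≤ q ^ k := by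
    rw [hq, ← Real.rpow_natCast, ← Real.rpow_mul (by positivity)]
    have : 1 ≤ ε / 2 * k := by
      rw [div_le_iff₀ hε] at hk
      linarith
    calc (P.card : ℝ) = (P.card : ℝ) ^ (1 : ℝ) := (Real.rpow_one _).symm
      _ ≤ _ := Real.rpow_le_rpow_of_exponent_le hP1R this
  set L : ℕ := 6 * (Nat.log 2 P.card + 1) with hL
  have hLq : (L : ℝ) ≤ q := hn₁ _ hPn₁
  have hS := fun i : ℕ => scale_aux k hk1 q ((2 : ℝ) ^ (i + 1)) hq1 (by positivity) P.card P rfl hqk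
  choose F hF1 hF2 hF3 using hS
  let dd : Sym2 (EuclideanSpace ℝ (Fin d)) → ℝ :=
    Sym2.lift ⟨fun a b => dist a b, fun a b => dist_comm a b⟩
  have hdd : ∀ a b, dd s(a, b) = dist a b := fun a b => rfl
  refine ⟨(Finset.range L).biUnion F, fun e => dd e / (4 * k), ?_, ?_, ?_, ?_, ?_⟩
  · intro e he
    obtain ⟨i, _, hi⟩ := Finset.mem_biUnion.1 he
    exact hF1 i e hi
  · have h1 : (((Finset.range L).biUnion F).card : ℝ) ≤ ∑ i ∈ Finset.range L, ((F i).card : ℝ) := by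
      exact_mod_cast Finset.card_biUnion_le
    have h2 : ∑ i ∈ Finset.range L, ((F i).card : ℝ) ≤ L * (q * P.card) := by
      refine (Finset.sum_le_sum (fun i _ => hF2 i)).trans ?_
      simp
    have h3 : (L : ℝ) * (q * P.card) ≤ q * (q * P.card) :=
      mul_le_mul_of_nonneg_right hLq (by positivity)
    have h4 : (P.card : ℝ) ^ (1 + ε) = q * (q * P.card) := by
      have hp : (0 : ℝ) < P.card := by linarith
      rw [hq, show 1 + ε = ε / 2 + (ε / 2 + 1) by ring, Real.rpow_add hp, Real.rpow_add hp,
        Real.rpow_one]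
    linarith
  · intro e he
    obtain ⟨i, _, hi⟩ := Finset.mem_biUnion.1 he
    have hnd := (hF1 i e hi).1
    induction e using Sym2.ind with
    | _ a b =>
      have : a ≠ b := fun h => hnd (Sym2.mk_isDiag_iff.2 h)
      have := dist_pos.2 this
      show 0 < dd s(a, b) / (4 * k)
      rw [hdd]
      positivity
  · intro x hx y hy hxy
    obtain ⟨hd1, hd2⟩ := hdist x hx y hy hxy
    obtain ⟨i, hi1, hi2⟩ := exists_nat_pow_near hd1 (one_lt_two : (1 : ℝ) < 2)
    have hiL : i < L := by
      have h1 : (P.card : ℝ) ^ 6 < 2 ^ L := by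
        have h2 : P.card < 2 ^ (Nat.log 2 P.card + 1) :=
          Nat.lt_pow_succ_log_self (by norm_num) _
        have h3 : P.card ^ 6 < 2 ^ L := by
          rw [hL, mul_comm, pow_mul]
          exact Nat.pow_lt_pow_left h2 (by norm_num)
        exact_mod_cast h3
      have h4 : (2 : ℝ) ^ i < 2 ^ L := by linarith
      exact (pow_lt_pow_iff_right₀ (by norm_num)).1 h4
    have hmem : ∀ e ∈ F i, e ∈ (Finset.range L).biUnion F := fun e he =>
      Finset.mem_biUnion.2 ⟨i, Finset.mem_range.2 hiL, he⟩
    rcases hF3 i x hx y hy hxy hi2.le with h | ⟨z, hz, h1, h2, h3⟩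
    · left
      refine ⟨hmem _ h, ?_⟩
      show dd s(x, y) / (4 * k) ≤ _
      rw [hdd]
      exact div_le_div_of_nonneg_left dist_nonneg (by norm_num) (by linarith)
    · right
      refine ⟨z, hz, hmem _ h1, hmem _ h2, ?_⟩
      show dd s(x, z) / (4 * k) + dd s(z, y) / (4 * k) ≤ _
      rw [hdd, hdd, ← add_div, div_le_iff₀ (by positivity)]
      have h4 : (2 : ℝ) * k * 2 ^ (i + 1) = 4 * k * 2 ^ i := by rw [pow_succ]; ring
      have h5 : 4 * (k : ℝ) * 2 ^ i ≤ 4 * k * dist x y :=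
        mul_le_mul_of_nonneg_left hi1 (by positivity)
      linarith
  · intro x _ y _ l hlx hly _
    refine walk_aux _ _ ?_ l x y hlx hly
    intro a b
    show 4 * (k : ℝ) * (dd s(a, b) / (4 * k)) = _
    rw [hdd]
    field_simp
end

section
/- LSH spanner guarantee: let P ⊂ ℝ^d be a finite set of n ≥ 2 points, let D > 0, Γ > 1, p₁, p₂ ∈ (0,1], and let μ be a probability distribution on a finite family H of functions from ℝ^d to a set U such that for all x, y ∈ P: if dist(x,y) ≤ D then μ{h : h(x) = h(y)} ≥ p₁, and if dist(x,y) ≥ Γ·D then μ{h : h(x) = h(y)} ≤ p₂. Let t := ⌈5 ln(n)/p₁⌉ and draw h₁, …, h_t independently according to μ (product measure on H^t). Then: (I) with probability at least 1 − 1/(2n³), for every pair x, y ∈ P with dist(x,y) ≤ D there exists i ∈ {1,…,t} with h_i(x) = h_i(y); and (II) with probability at least 1 − t·p₂·n²/2, there is no pair x, y ∈ P with dist(x,y) ≥ Γ·D and h_i(x) = h_i(y) for some i ∈ {1,…,t}. -/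
open Classical

theorem lsh_prod_aux {H : Type} [Fintype H] (μ : H → ℝ) (t : ℕ) (A : H → Prop)
    {i1 : DecidablePred A} {i2 : DecidablePred (fun g : Fin t → H => ∀ i, A (g i))} :
    ∑ g ∈ Finset.univ.filter (fun g : Fin t → H => ∀ i, A (g i)), ∏ i, μ (g i)
      = (∑ h ∈ Finset.univ.filter A, μ h) ^ t := by
  have h := Finset.prod_univ_sum (fun _ : Fin t => Finset.univ.filter A) (fun _ h => μ h)
  rw [Finset.prod_const, Finset.card_univ, Fintype.card_fin] at h
  rw [h]
  apply Finset.sum_congr _ (fun _ _ => rfl)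
  ext g
  simp [Fintype.mem_piFinset]

theorem lsh_compl_aux {G : Type} [Fintype G] (w : G → ℝ) (hw1 : ∑ g, w g = 1) (A : G → Prop)
    {i1 : DecidablePred A} {i2 : DecidablePred (fun g => ¬ A g)} :
    ∑ g ∈ Finset.univ.filter (fun g => ¬ A g), w g
      = 1 - ∑ g ∈ Finset.univ.filter A, w g := by
  rw [← hw1, ← Finset.sum_filter_add_sum_filter_not Finset.univ A w]
  simp only [add_sub_cancel_left]

theorem lsh_union_aux {G α : Type} [Fintype G] (P : Finset α) (w : G → ℝ) (hw : ∀ g, 0 ≤ w g)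
    (q : ℝ) (B : α → α → G → Prop) (hs : ∀ x y g, B x y g → B y x g)
    (hB : ∀ x ∈ P, ∀ y ∈ P, ∑ g ∈ Finset.univ.filter (B x y), w g ≤ q)
    {i1 : DecidablePred (fun g => ∃ x ∈ P, ∃ y ∈ P, x ≠ y ∧ B x y g)} :
    ∑ g ∈ Finset.univ.filter (fun g => ∃ x ∈ P, ∃ y ∈ P, x ≠ y ∧ B x y g), w g
      ≤ q * (P.card : ℝ) ^ 2 / 2 := by
  have h1 : ∑ g ∈ Finset.univ.filter (fun g => ∃ x ∈ P, ∃ y ∈ P, x ≠ y ∧ B x y g), 2 * w g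
      ≤ ∑ g, ∑ z ∈ P ×ˢ P, if B z.1 z.2 g then w g else 0 := by
    rw [Finset.sum_filter]
    apply Finset.sum_le_sum
    intro g _
    have hnn : ∀ z : α × α, 0 ≤ if B z.1 z.2 g then w g else 0 := by
      intro z
      split_ifs
      · exact hw g
      · exact le_rfl
    split_ifs with h
    · obtain ⟨x, hx, y, hy, hxy, hb⟩ := h
      have hsub : ({(x, y), (y, x)} : Finset (α × α)) ⊆ P ×ˢ P := by
        intro z hz
        simp only [Finset.mem_insert, Finset.mem_singleton] at hz
        rcases hz with rfl | rfl <;> simp [hx, hy]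
      refine le_trans ?_ (Finset.sum_le_sum_of_subset_of_nonneg hsub (fun z _ _ => hnn z))
      rw [Finset.sum_pair (by intro h; exact hxy (congrArg Prod.fst h))]
      simp only [hb, hs _ _ _ hb, if_true]
      linarith
    · exact Finset.sum_nonneg (fun z _ => hnn z)
  rw [Finset.sum_comm, ← Finset.mul_sum] at h1
  have h2 : ∑ z ∈ P ×ˢ P, ∑ g, (if B z.1 z.2 g then w g else 0) ≤ ∑ z ∈ P ×ˢ P, q := by
    apply Finset.sum_le_sum
    intro z hz
    rw [Finset.mem_product] at hz
    rw [← Finset.sum_filter]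
    exact hB _ hz.1 _ hz.2
  rw [Finset.sum_const, Finset.card_product, nsmul_eq_mul] at h2
  push_cast at h2
  nlinarith

/-- LSH spanner guarantee (Lemma 5.1): drawing `t = ⌈5 ln(n)/p₁⌉` hash functions
independently from a `(D, Γ·D, p₁, p₂)`-sensitive family, (I) with probability at
least `1 − 1/(2n³)` every close pair (distance `≤ D`) collides under some hash
function, and (II) with probability at least `1 − t·p₂·n²/2` no far pair
(distance `≥ Γ·D`) collides under any hash function. -/
theorem lsh_spanner_guarantee
    (d : ℕ) (P : Finset (EuclideanSpace ℝ (Fin d))) (hn : 2 ≤ P.card)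
    (D Γ p1 p2 : ℝ) (hD : 0 < D) (hΓ : 1 < Γ)
    (hp1 : 0 < p1) (hp1' : p1 ≤ 1) (hp2 : 0 < p2) (hp2' : p2 ≤ 1)
    (H U : Type) [Fintype H]
    (hfun : H → EuclideanSpace ℝ (Fin d) → U)
    -- `μ` is a probability distribution on the finite family `H`
    (μ : H → ℝ) (hμ0 : ∀ h, 0 ≤ μ h) (hμ1 : ∑ h : H, μ h = 1)
    -- `(D, Γ·D, p₁, p₂)`-sensitivity
    (hclose : ∀ x ∈ P, ∀ y ∈ P, dist x y ≤ D →
      p1 ≤ ∑ h ∈ Finset.univ.filter (fun h : H => hfun h x = hfun h y), μ h)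
    (hfar : ∀ x ∈ P, ∀ y ∈ P, Γ * D ≤ dist x y →
      ∑ h ∈ Finset.univ.filter (fun h : H => hfun h x = hfun h y), μ h ≤ p2) :
    let n : ℕ := P.card
    let t : ℕ := ⌈5 * Real.log n / p1⌉₊
    -- (I)
    (1 - 1 / (2 * (n : ℝ) ^ 3) ≤
      ∑ g ∈ Finset.univ.filter (fun g : Fin t → H =>
          ∀ x ∈ P, ∀ y ∈ P, dist x y ≤ D → ∃ i, hfun (g i) x = hfun (g i) y),
        ∏ i, μ (g i)) ∧
    -- (II)
    (1 - (t : ℝ) * p2 * (n : ℝ) ^ 2 / 2 ≤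
      ∑ g ∈ Finset.univ.filter (fun g : Fin t → H =>
          ¬ ∃ x ∈ P, ∃ y ∈ P, Γ * D ≤ dist x y ∧
            ∃ i, hfun (g i) x = hfun (g i) y),
        ∏ i, μ (g i)) := by
  intro n t
  have hn' : (2 : ℝ) ≤ n := by exact_mod_cast hn
  have hn0 : (0 : ℝ) < n := by linarith
  have ht : 5 * Real.log n / p1 ≤ t := Nat.le_ceil _
  have hlog : 0 < Real.log n := Real.log_pos (by linarith)
  have ht0 : 0 < t := Nat.ceil_pos.mpr (by positivity)
  have hw : ∀ g : Fin t → H, 0 ≤ ∏ i, μ (g i) := fun g => Finset.prod_nonneg (fun i _ => hμ0 _)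
  have hw1 : ∑ g : Fin t → H, ∏ i, μ (g i) = 1 := by
    have h := lsh_prod_aux μ t (fun _ => True) (i1 := inferInstance) (i2 := inferInstance)
    simpa [hμ1] using h
  have hle1 : ∀ x y, ∑ h ∈ Finset.univ.filter (fun h : H => hfun h x = hfun h y), μ h ≤ 1 := by
    intro x y
    rw [← hμ1]
    exact Finset.sum_le_sum_of_subset_of_nonneg (Finset.filter_subset _ _) (fun h _ _ => hμ0 h)
  have hno : ∀ x y, ∀ {i2 : DecidablePred
      (fun g : Fin t → H => ∀ i, ¬ hfun (g i) x = hfun (g i) y)}, ∑ g ∈ Finset.univ.filter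
        (fun g : Fin t → H => ∀ i, ¬ hfun (g i) x = hfun (g i) y), ∏ i, μ (g i)
      = (1 - ∑ h ∈ Finset.univ.filter (fun h : H => hfun h x = hfun h y), μ h) ^ t := by
    intro x y i2
    rw [lsh_prod_aux μ t (fun h => ¬ hfun h x = hfun h y) (i1 := Classical.decPred _),
      lsh_compl_aux μ hμ1 (fun h => hfun h x = hfun h y)]
  constructor
  · have hU := lsh_union_aux (i1 := Classical.decPred _) P (fun g : Fin t → H => ∏ i, μ (g i)) hw (1 / (n : ℝ) ^ 5)
      (fun x y g => dist x y ≤ D ∧ ∀ i, ¬ hfun (g i) x = hfun (g i) y)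
      (by
        rintro x y g ⟨h1, h2⟩
        exact ⟨by rwa [dist_comm], fun i h => h2 i h.symm⟩)
      (by
        intro x hx y hy
        by_cases hd : dist x y ≤ D
        · simp only [hd, true_and]
          rw [hno x y]
          have hc := hclose x hx y hy hd
          have hl := hle1 x y
          generalize (∑ h ∈ Finset.univ.filter (fun h : H => hfun h x = hfun h y), μ h) = s at hc hl
          calc (1 - s) ^ t ≤ (Real.exp (-p1)) ^ t := by
                apply pow_le_pow_left₀ (by linarith)
                have := Real.add_one_le_exp (-p1)
                linarith
            _ = Real.exp (-(p1 * t)) := by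
                rw [← Real.exp_nat_mul]; congr 1; ring
            _ ≤ Real.exp (-(5 * Real.log n)) := by
                apply Real.exp_le_exp.mpr
                rw [div_le_iff₀ hp1] at ht
                linarith
            _ = 1 / (n : ℝ) ^ 5 := by
                rw [Real.exp_neg, one_div]
                congr 1
                have := Real.exp_nat_mul (Real.log n) 5
                rw [Real.exp_log hn0] at this
                exact_mod_cast this
        · simp only [hd, false_and, Finset.filter_false, Finset.sum_empty]
          positivity)
    have hC := lsh_compl_aux (i1 := Classical.decPred _) (i2 := Classical.decPred _) (fun g : Fin t → H => ∏ i, μ (g i)) hw1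
      (fun g => ∃ x ∈ P, ∃ y ∈ P, x ≠ y ∧ dist x y ≤ D ∧ ∀ i, ¬ hfun (g i) x = hfun (g i) y)
    have hE : 1 / (n : ℝ) ^ 5 * (P.card : ℝ) ^ 2 / 2 = 1 / (2 * (n : ℝ) ^ 3) := by
      change 1 / (n : ℝ) ^ 5 * (n : ℝ) ^ 2 / 2 = 1 / (2 * (n : ℝ) ^ 3)
      field_simp
    rw [hE] at hU
    refine le_trans (sub_le_sub_left hU 1) (le_trans hC.symm.le ?_)
    apply Finset.sum_le_sum_of_subset_of_nonneg _ (fun g _ _ => hw g)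
    intro g hg
    simp only [Finset.mem_filter, Finset.mem_univ, true_and] at hg ⊢
    intro x hx y hy hd
    by_cases hxy : x = y
    · exact ⟨⟨0, ht0⟩, by rw [hxy]⟩
    · by_contra hne
      exact hg ⟨x, hx, y, hy, hxy, hd, fun i h => hne ⟨i, h⟩⟩
  · have hU := lsh_union_aux (i1 := Classical.decPred _) P (fun g : Fin t → H => ∏ i, μ (g i)) hw (t * p2)
      (fun x y g => Γ * D ≤ dist x y ∧ ∃ i, hfun (g i) x = hfun (g i) y)
      (by
        rintro x y g ⟨h1, i, h2⟩
        exact ⟨by rwa [dist_comm], i, h2.symm⟩)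
      (by
        intro x hx y hy
        by_cases hd : Γ * D ≤ dist x y
        · simp only [hd, true_and]
          have hc := hfar x hx y hy hd
          have hl := hle1 x y
          have h1 := hno x y (i2 := Classical.decPred _)
          generalize (∑ h ∈ Finset.univ.filter (fun h : H => hfun h x = hfun h y), μ h) = s
            at hc hl h1
          have h3 := one_add_mul_le_pow (by linarith : -2 ≤ -s) t
          rw [← sub_eq_add_neg] at h3
          have h4 : (t : ℝ) * s ≤ t * p2 := by gcongr
          have h5 := lsh_compl_aux (fun g : Fin t → H => ∏ i, μ (g i)) hw1
            (fun g => ∀ i, ¬ hfun (g i) x = hfun (g i) y)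
            (i1 := Classical.decPred _) (i2 := Classical.decPred _)
          rw [h1] at h5
          refine le_trans (le_trans (le_of_eq ?_) h5.le) (by linarith)
          apply Finset.sum_congr _ (fun _ _ => rfl)
          ext g
          simp
        · simp only [hd, false_and, Finset.filter_false, Finset.sum_empty]
          positivity)
    have hC := lsh_compl_aux (i1 := Classical.decPred _) (i2 := Classical.decPred _) (fun g : Fin t → H => ∏ i, μ (g i)) hw1
      (fun g => ∃ x ∈ P, ∃ y ∈ P, x ≠ y ∧ Γ * D ≤ dist x y ∧ ∃ i, hfun (g i) x = hfun (g i) y)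
    refine le_trans (sub_le_sub_left hU 1) (le_trans hC.symm.le ?_)
    apply Finset.sum_le_sum_of_subset_of_nonneg _ (fun g _ _ => hw g)
    intro g hg
    simp only [Finset.mem_filter, Finset.mem_univ, true_and] at hg ⊢
    rintro ⟨x, hx, y, hy, hd, i, h⟩
    refine hg ⟨x, hx, y, hy, ?_, hd, i, h⟩
    rintro rfl
    rw [dist_self] at hd
    nlinarith
end

section
/- Composition identity for ℓ-smallest selections over graph neighborhoods: let G be a graph on a finite vertex set V, let X be a linearly ordered set, let ℓ ≥ 1 be an integer, and for each v ∈ V let A_v ⊆ X be a finite set. For a finite set A ⊆ X, let min_ℓ(A) denote the set of the min(ℓ, |A|) smallest elements of A, and let N^t(u) := {v ∈ V : d_G(u,v) ≤ t} denote the t-hop neighborhood of u (including u). Then for every u ∈ V and every integer t ≥ 1: min_ℓ( ⋃_{v ∈ N¹(u)} min_ℓ( ⋃_{w ∈ N^{t−1}(v)} A_w ) ) = min_ℓ( ⋃_{v ∈ N^t(u)} A_v ). -/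
open Classical

/-- `minl ℓ A` is the set of the `min(ℓ, |A|)` smallest elements of `A`:
an element `a ∈ A` belongs to it iff fewer than `ℓ` elements of `A` are below it. -/
def minl {X : Type*} [LinearOrder X] (ℓ : ℕ) (A : Finset X) : Finset X :=
  A.filter (fun a => (A.filter (fun b => b < a)).card < ℓ)

/-- The `t`-hop neighborhood `N^t(u) = {v : d_G(u,v) ≤ t}` of `u` in `G`
(including `u` itself). -/
noncomputable def hopBall {V : Type*} [Fintype V] (G : SimpleGraph V) (t : ℕ)
    (u : V) : Finset V :=
  Finset.univ.filter (fun v => ∃ p : G.Walk u v, p.length ≤ t)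

theorem minl_sandwich {X : Type*} [LinearOrder X] (ℓ : ℕ) (U W : Finset X)
    (h1 : minl ℓ U ⊆ W) (h2 : W ⊆ U) : minl ℓ W = minl ℓ U := by
  ext x
  constructor
  · intro hx
    simp only [minl, Finset.mem_filter] at hx ⊢
    obtain ⟨hxW, hc⟩ := hx
    refine ⟨h2 hxW, ?_⟩
    have key : ∀ y ∈ U, y < x → y ∈ W := by
      by_contra hcon
      push Not at hcon
      obtain ⟨y0, hy0U, hy0x, hy0W⟩ := hcon
      obtain ⟨y, hy, hmin⟩ := Finset.exists_min_image
        (U.filter (fun y => y < x ∧ y ∉ W)) id ⟨y0, by simp [*]⟩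
      simp only [Finset.mem_filter, id] at hy hmin
      obtain ⟨hyU, hyx, hyW⟩ := hy
      apply hyW
      apply h1
      simp only [minl, Finset.mem_filter]
      refine ⟨hyU, lt_of_le_of_lt (Finset.card_le_card ?_) hc⟩
      intro z hz
      simp only [Finset.mem_filter] at hz ⊢
      refine ⟨?_, hz.2.trans hyx⟩
      by_contra hzW
      exact absurd (hmin z ⟨hz.1, hz.2.trans hyx, hzW⟩) (not_le.mpr hz.2)
    refine lt_of_le_of_lt (Finset.card_le_card ?_) hc
    intro z hz
    simp only [Finset.mem_filter] at hz ⊢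
    exact ⟨key z hz.1 hz.2, hz.2⟩
  · intro hx
    have hxW := h1 hx
    simp only [minl, Finset.mem_filter] at hx ⊢
    exact ⟨hxW, lt_of_le_of_lt
      (Finset.card_le_card (Finset.filter_subset_filter _ h2)) hx.2⟩

theorem mem_hopBall_step {V : Type*} [Fintype V] (G : SimpleGraph V) (t : ℕ) (u w : V) :
    w ∈ hopBall G (t + 1) u ↔ ∃ v ∈ hopBall G 1 u, w ∈ hopBall G t v := by
  simp only [hopBall, Finset.mem_filter, Finset.mem_univ, true_and]
  constructor
  · rintro ⟨p, hp⟩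
    cases p with
    | nil => exact ⟨u, ⟨.nil, by simp⟩, .nil, by simp⟩
    | cons h q =>
      simp only [SimpleGraph.Walk.length_cons] at hp
      exact ⟨_, ⟨.cons h .nil, by simp⟩, q, by omega⟩
  · rintro ⟨v, ⟨p, hp⟩, q, hq⟩
    exact ⟨p.append q, by rw [SimpleGraph.Walk.length_append]; omega⟩

/-- Composition identity for `ℓ`-smallest selections over graph neighborhoods:
`min_ℓ(⋃_{v∈N¹(u)} min_ℓ(⋃_{w∈N^{t−1}(v)} A_w)) = min_ℓ(⋃_{v∈N^t(u)} A_v)`. -/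
theorem minl_neighborhood_composition
    {V X : Type*} [Fintype V] [LinearOrder X]
    (G : SimpleGraph V) (ℓ : ℕ) (hℓ : 1 ≤ ℓ) (A : V → Finset X)
    (u : V) (t : ℕ) (ht : 1 ≤ t) :
    minl ℓ ((hopBall G 1 u).biUnion (fun v =>
        minl ℓ ((hopBall G (t - 1) v).biUnion A)))
      = minl ℓ ((hopBall G t u).biUnion A) := by
  obtain ⟨s, rfl⟩ : ∃ s, t = s + 1 := ⟨t - 1, by omega⟩
  rw [Nat.add_sub_cancel]
  have hsub : ∀ v ∈ hopBall G 1 u,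
      (hopBall G s v).biUnion A ⊆ (hopBall G (s + 1) u).biUnion A := by
    intro v hv
    apply Finset.biUnion_subset_biUnion_of_subset_left
    intro w hw
    exact (mem_hopBall_step G s u w).2 ⟨v, hv, hw⟩
  apply minl_sandwich
  · intro x hx
    obtain ⟨hxU, hc⟩ := Finset.mem_filter.1 hx
    obtain ⟨w, hw, hxw⟩ := Finset.mem_biUnion.1 hxU
    obtain ⟨v, hv, hwv⟩ := (mem_hopBall_step G s u w).1 hw
    refine Finset.mem_biUnion.2 ⟨v, hv, Finset.mem_filter.2
      ⟨Finset.mem_biUnion.2 ⟨w, hwv, hxw⟩, lt_of_le_of_lt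
        (Finset.card_le_card (Finset.filter_subset_filter _ (hsub v hv))) hc⟩⟩
  · intro x hx
    obtain ⟨v, hv, hxv⟩ := Finset.mem_biUnion.1 hx
    exact hsub v hv (Finset.mem_filter.1 hxv).1
end

section
/- Ball-counting approximation of the facility radius: let C be a finite nonempty set of points in ℝ^d, f ∈ ℝ^d, λ > 0, and let r_f := max{r ≥ 0 : ∑_{c∈C}[r² − ‖c−f‖²]⁺ ≤ λ}. Define r_f' := sup{r ≥ 0 : |B_C(f,r)|·r² ≤ λ}, where B_C(f,r) := {c ∈ C : ‖c−f‖ ≤ r}. Then r_f/3 ≤ r_f' ≤ r_f. -/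
open Classical

/-- Ball-counting approximation of the facility radius: with
`r_f = max{r ≥ 0 : ∑_{c∈C}[r² − ‖c−f‖²]⁺ ≤ λ}` and
`r_f' = sup{r ≥ 0 : |B_C(f,r)|·r² ≤ λ}`, we have `r_f/3 ≤ r_f' ≤ r_f`. -/
theorem radius_ball_approx
    (d : ℕ) (C : Finset (EuclideanSpace ℝ (Fin d))) (hC : C.Nonempty)
    (f : EuclideanSpace ℝ (Fin d)) (lam : ℝ) (hlam : 0 < lam)
    -- `rf` is the maximum of `{r ≥ 0 : ∑_{c∈C}[r² − ‖c−f‖²]⁺ ≤ λ}`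
    (rf : ℝ) (hrf0 : 0 ≤ rf)
    (hrf1 : ∑ c ∈ C, max 0 (rf ^ 2 - ‖c - f‖ ^ 2) ≤ lam)
    (hrfmax : ∀ s : ℝ, 0 ≤ s →
      (∑ c ∈ C, max 0 (s ^ 2 - ‖c - f‖ ^ 2)) ≤ lam → s ≤ rf)
    -- `rf' = sup{r ≥ 0 : |B_C(f,r)|·r² ≤ λ}`
    (rf' : ℝ)
    (hrf' : rf' = sSup {s : ℝ | 0 ≤ s ∧
      ((C.filter (fun c => dist c f ≤ s)).card : ℝ) * s ^ 2 ≤ lam}) :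
    rf / 3 ≤ rf' ∧ rf' ≤ rf := by
  have key : ∀ s : ℝ, ((C.filter (fun c => dist c f ≤ s)).card : ℝ) * s ^ 2
      = ∑ c ∈ C, if dist c f ≤ s then s ^ 2 else 0 := by
    intro s
    rw [← Finset.sum_filter, Finset.sum_const, nsmul_eq_mul]
  have hub : ∀ s ∈ {s : ℝ | 0 ≤ s ∧
      ((C.filter (fun c => dist c f ≤ s)).card : ℝ) * s ^ 2 ≤ lam}, s ≤ rf := by
    rintro s ⟨h0, h1⟩
    refine hrfmax s h0 (le_trans ?_ h1)
    rw [key]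
    refine Finset.sum_le_sum fun c _ => ?_
    rw [dist_eq_norm]
    have hn := norm_nonneg (c - f)
    split_ifs with h
    · exact max_le (by positivity) (by nlinarith)
    · exact max_le le_rfl (by nlinarith)
  have hmem : rf / 3 ∈ {s : ℝ | 0 ≤ s ∧
      ((C.filter (fun c => dist c f ≤ s)).card : ℝ) * s ^ 2 ≤ lam} := by
    refine ⟨by positivity, le_trans ?_ hrf1⟩
    rw [key]
    refine Finset.sum_le_sum fun c _ => ?_
    rw [dist_eq_norm]
    have hn := norm_nonneg (c - f)
    split_ifs with h
    · exact le_max_of_le_right (by nlinarith)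
    · exact le_max_left _ _
  rw [hrf']
  exact ⟨le_csSup ⟨rf, hub⟩ hmem, csSup_le ⟨_, hmem⟩ hub⟩
end

section
/- Constant-factor approximation of the minimal dual value via dyadic ball minima: let F be a finite nonempty set of points in ℝ^d, c ∈ ℝ^d with ‖c − f‖ ≥ 1 for all f ∈ F, and let r : F → ℝ_{>0} assign a positive radius r_f to each facility. Define α_c^* := min_{f∈F} max{r_f², ‖c−f‖²}, and for each integer ℓ ≥ 0 with B_F(c, 2^ℓ) ≠ ∅ define ρ(ℓ) := min{r_f : f ∈ B_F(c, 2^ℓ)}, where B_F(c,s) := {f ∈ F : ‖c−f‖ ≤ s}. Set ᾱ_c := min over all such ℓ of max{ρ(ℓ)², 4^ℓ}. Then α_c^* ≤ ᾱ_c ≤ 4·α_c^*. -/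
open Classical

/-- Constant-factor approximation of the minimal dual value via dyadic ball minima:
with `α_c^* = min_{f∈F} max{r_f², dist(c,f)²}`, `ρ(ℓ) = min{r_f : f ∈ B_F(c, 2^ℓ)}`
and `ᾱ_c = min_{ℓ : B_F(c,2^ℓ) ≠ ∅} max{ρ(ℓ)², 4^ℓ}`, we have
`α_c^* ≤ ᾱ_c ≤ 4·α_c^*`. -/
theorem dyadic_dual_approx
    (d : ℕ) (F : Finset (EuclideanSpace ℝ (Fin d))) (hF : F.Nonempty)
    (c : EuclideanSpace ℝ (Fin d)) (hc : ∀ f ∈ F, 1 ≤ dist c f)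
    (r : EuclideanSpace ℝ (Fin d) → ℝ) (hr : ∀ f ∈ F, 0 < r f)
    -- `abar` is the minimum over all `ℓ` with nonempty dyadic ball of
    -- `max{ρ(ℓ)², 4^ℓ}`
    (abar : ℝ)
    (habar1 : ∃ ℓ : ℕ, ∃ hne : (F.filter (fun f => dist c f ≤ 2 ^ ℓ)).Nonempty,
      abar = max ((((F.filter (fun f => dist c f ≤ 2 ^ ℓ)).image r).min'
        (hne.image r)) ^ 2) ((4 : ℝ) ^ ℓ))
    (habar2 : ∀ ℓ : ℕ, ∀ hne : (F.filter (fun f => dist c f ≤ 2 ^ ℓ)).Nonempty,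
      abar ≤ max ((((F.filter (fun f => dist c f ≤ 2 ^ ℓ)).image r).min'
        (hne.image r)) ^ 2) ((4 : ℝ) ^ ℓ)) :
    F.inf' hF (fun f => max (r f ^ 2) (dist c f ^ 2)) ≤ abar ∧
    abar ≤ 4 * F.inf' hF (fun f => max (r f ^ 2) (dist c f ^ 2)) := by
  have h4 : ∀ n : ℕ, (4 : ℝ) ^ n = (2 ^ n) ^ 2 := by
    intro n
    rw [← pow_mul, mul_comm, pow_mul]
    norm_num
  constructor
  · obtain ⟨n, hne, he⟩ := habar1
    have hm := Finset.min'_mem _ (hne.image r)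
    obtain ⟨f, hf, hfr⟩ := Finset.mem_image.1 hm
    rw [Finset.mem_filter] at hf
    rw [he, ← hfr, h4]
    refine (Finset.inf'_le _ hf.1).trans ?_
    exact max_le_max le_rfl (pow_le_pow_left₀ dist_nonneg hf.2 2)
  · obtain ⟨f, hf, hfe⟩ := Finset.exists_mem_eq_inf' hF
      (fun f => max (r f ^ 2) (dist c f ^ 2))
    rw [hfe]
    obtain ⟨n, hn1, hn2⟩ := exists_nat_pow_near (hc f hf) (one_lt_two : (1 : ℝ) < 2)
    have hfm : f ∈ F.filter (fun f => dist c f ≤ 2 ^ (n + 1)) :=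
      Finset.mem_filter.2 ⟨hf, hn2.le⟩
    have hne : (F.filter (fun f => dist c f ≤ 2 ^ (n + 1))).Nonempty := ⟨f, hfm⟩
    refine (habar2 (n + 1) hne).trans ?_
    have hle := Finset.min'_le _ _ (Finset.mem_image_of_mem r hfm)
    have hm := Finset.min'_mem _ (hne.image r)
    obtain ⟨g, hg, hgr⟩ := Finset.mem_image.1 hm
    have hpos := hr g (Finset.mem_filter.1 hg).1
    rw [hgr] at hpos
    have h1 := pow_le_pow_left₀ hpos.le hle 2
    have h2 : ((2 : ℝ) ^ n) ^ 2 ≤ dist c f ^ 2 := pow_le_pow_left₀ (by positivity) hn1 2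
    have h3 := le_max_left (r f ^ 2) (dist c f ^ 2)
    have h5 := le_max_right (r f ^ 2) (dist c f ^ 2)
    have h6 := sq_nonneg (r f)
    apply max_le
    · refine h1.trans ?_
      show r f ^ 2 ≤ 4 * max (r f ^ 2) (dist c f ^ 2)
      linarith
    · show (4 : ℝ) ^ (n + 1) ≤ 4 * max (r f ^ 2) (dist c f ^ 2)
      rw [pow_succ, h4]
      linarith
end
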